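/- arXiv:2102.05538 — 3 statements merged into one kernel-verified Lean document; each statement's English description precedes it below -/
import Mathlib

section
/- Generalized Thomson principle (reversible case): assume detailed balance. For any disjoint nonempty A, B ⊆ 𝓗 and every flow φ, one has [∑_{x∈𝓗} h_{A,B}(x)(div φ)(x)]² ≤ cap(A,B)·‖φ‖², and equality holds if and only if φ = c·Ψ_{h_{A,B}} for some c ∈ ℝ (for nonzero φ, some c ≠ 0). Consequently cap(A,B) = sup over flows φ with ‖φ‖ > 0 of ‖φ‖^{−2}·[∑_{x∈𝓗} h_{A,B}(x)(div φ)(x)]², the supremum being attained at φ = Ψ_{h_{A,B}}. -/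
/-!
Write `⟨φ, ψ⟩` for the inner product of flows behind `flowNormSq`. Summation by parts and the
antisymmetry of `φ` give `∑ x, h x * div φ x = -⟨φ, Ψ_h⟩` (`sum_mul_divg`), and detailed balance
gives `‖Ψ_h‖² = 𝓓(h)` (`flowNormSq_PsiF`). The inequality is therefore Cauchy–Schwarz for `φ` and
`Ψ_h`, proved here from the expansion of `‖φ + t Ψ_h‖²` (`flowNormSq_add`) at the minimizing `t`.
Since the norm is definite on flows (`flow_eq_zero`), equality forces `φ` to be a multiple of `Ψ_h`.
Dividing by `𝓓(h)` is legitimate because `𝓓(h) > 0`: otherwise `h` would be constant along every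
edge of positive rate, hence constant by irreducibility, whereas it is `1` on `A` and `0` on `B`.
-/


open Finset

section Setup

variable {H : Type*}

/-- The generator of the continuous-time Markov chain with jump rates `r`:
`(𝓛 f)(x) = ∑ y, r x y * (f y - f x)`. -/
noncomputable def jumpGen [Fintype H] (r : H → H → ℝ) (f : H → ℝ) (x : H) : ℝ :=
  ∑ y, r x y * (f y - f x)

/-- The Dirichlet form `𝓓(f) = ∑ x, μ x * f x * (-(𝓛 f) x)`. -/
noncomputable def dirForm [Fintype H] (μ : H → ℝ) (r : H → H → ℝ) (f : H → ℝ) : ℝ :=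
  ∑ x, μ x * f x * (-jumpGen r f x)

/-- Irreducibility of the rates: any two distinct states are joined by a chain of
transitions with positive rate. -/
def IrreducibleRates (r : H → H → ℝ) : Prop :=
  ∀ x y : H, x ≠ y → ∃ (n : ℕ) (z : ℕ → H),
    z 0 = x ∧ z n = y ∧ ∀ i < n, 0 < r (z i) (z (i + 1))

/-- `h` is the equilibrium potential between `A` and `B` (w.r.t. rates `r`):
`h ≡ 1` on `A`, `h ≡ 0` on `B`, and `𝓛 h = 0` off `A ∪ B`. -/
def IsEqPotential [Fintype H] [DecidableEq H] (r : H → H → ℝ) (A B : Finset H)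
    (h : H → ℝ) : Prop :=
  (∀ x ∈ A, h x = 1) ∧ (∀ x ∈ B, h x = 0) ∧ ∀ x, x ∉ A ∪ B → jumpGen r h x = 0

/-- Conductance `c(x,y) = μ x * r x y`. -/
noncomputable def conduct (μ : H → ℝ) (r : H → H → ℝ) (x y : H) : ℝ := μ x * r x y

/-- Symmetrized conductance `c^s(x,y) = (c(x,y) + c(y,x))/2`. -/
noncomputable def conductS (μ : H → ℝ) (r : H → H → ℝ) (x y : H) : ℝ :=
  (conduct μ r x y + conduct μ r y x) / 2

/-- A flow: an antisymmetric function vanishing on pairs with zero symmetrized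
conductance. -/
def IsFlowOf (μ : H → ℝ) (r : H → H → ℝ) (φ : H → H → ℝ) : Prop :=
  (∀ x y, φ x y = -φ y x) ∧ ∀ x y, conductS μ r x y = 0 → φ x y = 0

/-- The square of the flow norm:
`‖φ‖² = (1/2) ∑_{(x,y) : c^s(x,y) > 0} φ(x,y)² / c^s(x,y)`. -/
noncomputable def flowNormSq [Fintype H] (μ : H → ℝ) (r : H → H → ℝ)
    (φ : H → H → ℝ) : ℝ :=
  (1 / 2) * ∑ x, ∑ y, if 0 < conductS μ r x y then φ x y ^ 2 / conductS μ r x y else 0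

/-- Divergence of a flow: `(div φ)(x) = ∑ y, φ x y`. -/
noncomputable def divg [Fintype H] (φ : H → H → ℝ) (x : H) : ℝ := ∑ y, φ x y

/-- The flow `Ψ_f(x,y) = c^s(x,y) (f y - f x)`. -/
noncomputable def PsiF (μ : H → ℝ) (r : H → H → ℝ) (f : H → ℝ) (x y : H) : ℝ :=
  conductS μ r x y * (f y - f x)

/-- The flow `Φ_f(x,y) = f(y) c(y,x) - f(x) c(x,y)` on pairs with `c^s > 0`,
zero elsewhere. -/
noncomputable def PhiF (μ : H → ℝ) (r : H → H → ℝ) (f : H → ℝ) (x y : H) : ℝ :=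
  if 0 < conductS μ r x y then f y * conduct μ r y x - f x * conduct μ r x y else 0

/-- The flow `Φ*_f(x,y) = f(y) c(x,y) - f(x) c(y,x)` on pairs with `c^s > 0`,
zero elsewhere. -/
noncomputable def PhiStarF (μ : H → ℝ) (r : H → H → ℝ) (f : H → ℝ) (x y : H) : ℝ :=
  if 0 < conductS μ r x y then f y * conduct μ r x y - f x * conduct μ r y x else 0

/-- The class `𝔘_a(A,B)` of flows: divergence-free off `A ∪ B`, with
`(div φ)(A) = a` and `(div φ)(B) = -a`. -/
def InFlowClass [Fintype H] [DecidableEq H] (μ : H → ℝ) (r : H → H → ℝ) (a : ℝ)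
    (A B : Finset H) (φ : H → H → ℝ) : Prop :=
  IsFlowOf μ r φ ∧ (∀ x, x ∉ A ∪ B → divg φ x = 0) ∧
    (∑ x ∈ A, divg φ x = a) ∧ (∑ x ∈ B, divg φ x = -a)

/-- The adjoint rates `r†(x,y) = μ(y) r(y,x) / μ(x)`. -/
noncomputable def radj (μ : H → ℝ) (r : H → H → ℝ) (x y : H) : ℝ := μ y * r y x / μ x

end Setup

section Thomson

variable {H : Type*} {μ : H → ℝ} {r : H → H → ℝ}

lemma conductS_symm (x y : H) : conductS μ r x y = conductS μ r y x := by
  unfold conductS; ring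

lemma conductS_eq (hrev : ∀ x y, μ x * r x y = μ y * r y x) (x y : H) :
    conductS μ r x y = μ x * r x y := by
  unfold conductS conduct; rw [← hrev x y]; ring

lemma isFlowOf_PsiF (f : H → ℝ) : IsFlowOf μ r (PsiF μ r f) := by
  refine ⟨fun x y => ?_, fun x y hc => ?_⟩
  · unfold PsiF; rw [conductS_symm x y]; ring
  · unfold PsiF; rw [hc, zero_mul]

lemma isFlowOf_add_mul {φ ψ : H → H → ℝ} (hφ : IsFlowOf μ r φ) (hψ : IsFlowOf μ r ψ) (t : ℝ) :
    IsFlowOf μ r (fun x y => φ x y + t * ψ x y) := by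
  refine ⟨fun x y => ?_, fun x y hc => ?_⟩
  · beta_reduce; rw [hφ.1 x y, hψ.1 x y]; ring
  · beta_reduce; rw [hφ.2 x y hc, hψ.2 x y hc]; ring

/-- A function with `Ψ_f = 0` is constant, by irreducibility. -/
lemma eq_of_PsiF_eq_zero (hμ : ∀ x, 0 < μ x) (hirr : IrreducibleRates r)
    (hrev : ∀ x y, μ x * r x y = μ y * r y x) {f : H → ℝ}
    (h0 : ∀ x y, PsiF μ r f x y = 0) {x y : H} (hxy : x ≠ y) : f x = f y := by
  obtain ⟨n, z, rfl, rfl, hz⟩ := hirr x y hxy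
  have key : ∀ i ≤ n, f (z 0) = f (z i) := by
    intro i
    induction i with
    | zero => intro _; rfl
    | succ k ih =>
      intro hk
      rw [ih (by omega)]
      have h1 := h0 (z k) (z (k + 1))
      rw [PsiF, conductS_eq hrev] at h1
      have h2 := (mul_eq_zero.mp h1).resolve_left (mul_pos (hμ _) (hz k (by omega))).ne'
      linarith
  exact key n le_rfl

variable [Fintype H]

lemma flowNormSq_nonneg (φ : H → H → ℝ) : 0 ≤ flowNormSq μ r φ := by
  unfold flowNormSq
  refine mul_nonneg (by norm_num) (sum_nonneg fun x _ => sum_nonneg fun y _ => ?_)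
  split_ifs <;> positivity

/-- The flow norm is definite on flows. -/
lemma flow_eq_zero (hc : ∀ x y, 0 ≤ conductS μ r x y) {φ : H → H → ℝ} (hφ : IsFlowOf μ r φ)
    (h0 : flowNormSq μ r φ = 0) (x y : H) : φ x y = 0 := by
  have hterm : ∀ x y, 0 ≤
      (if 0 < conductS μ r x y then φ x y ^ 2 / conductS μ r x y else 0) := by
    intro x y
    split_ifs <;> positivity
  unfold flowNormSq at h0
  have h1 := (mul_eq_zero.mp h0).resolve_left (by norm_num)
  have h2 := (sum_eq_zero_iff_of_nonneg fun x _ => sum_nonneg fun y _ => hterm x y).mp h1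
    x (mem_univ x)
  have h3 := (sum_eq_zero_iff_of_nonneg fun y _ => hterm x y).mp h2 y (mem_univ y)
  rcases (hc x y).eq_or_lt with hz | hpos
  · exact hφ.2 x y hz.symm
  · rw [if_pos hpos] at h3
    simpa [hpos.ne'] using h3

/-- The cross term is `2 t ⟨φ, Ψ_f⟩`: the conductances cancel in the inner product with `Ψ_f`. -/
lemma flowNormSq_add (hc : ∀ x y, 0 ≤ conductS μ r x y) {φ : H → H → ℝ}
    (hφ : IsFlowOf μ r φ) (f : H → ℝ) (t : ℝ) :
    flowNormSq μ r (fun x y => φ x y + t * PsiF μ r f x y) =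
      flowNormSq μ r φ + t * (∑ x, ∑ y, φ x y * (f y - f x))
        + t ^ 2 * flowNormSq μ r (PsiF μ r f) := by
  unfold flowNormSq
  simp only [mul_sum]
  simp only [← sum_add_distrib]
  refine sum_congr rfl fun x _ => sum_congr rfl fun y _ => ?_
  rcases (hc x y).eq_or_lt with hz | hpos
  · rw [hφ.2 x y hz.symm]; simp [← hz]
  · simp only [if_pos hpos, PsiF]
    field_simp
    ring

/-- Summation by parts for an antisymmetric `φ`. -/
lemma sum_mul_divg {φ : H → H → ℝ} (hφ : ∀ x y, φ x y = -φ y x) (f : H → ℝ) :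
    ∑ x, ∑ y, φ x y * (f y - f x) = -2 * ∑ x, f x * divg φ x := by
  have h1 : ∑ x, ∑ y, φ x y * f y = -∑ x, ∑ y, φ x y * f x := by
    rw [sum_comm, ← sum_neg_distrib]
    refine sum_congr rfl fun x _ => ?_
    rw [← sum_neg_distrib]
    refine sum_congr rfl fun y _ => ?_
    rw [hφ y x]; ring
  have h2 : ∑ x, f x * divg φ x = ∑ x, ∑ y, φ x y * f x := by
    refine sum_congr rfl fun x _ => ?_
    rw [divg, mul_comm, sum_mul]
  simp only [mul_sub, sum_sub_distrib]
  rw [h1, h2]; ring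

/-- Green's identity `∑ f div Ψ_f = -𝓓(f)`; this uses detailed balance. -/
lemma sum_mul_divg_PsiF (hrev : ∀ x y, μ x * r x y = μ y * r y x) (f : H → ℝ) :
    ∑ x, f x * divg (PsiF μ r f) x = -dirForm μ r f := by
  unfold dirForm
  rw [← sum_neg_distrib]
  refine sum_congr rfl fun x _ => ?_
  have : divg (PsiF μ r f) x = μ x * jumpGen r f x := by
    simp only [divg, jumpGen, PsiF, mul_sum, conductS_eq hrev, mul_assoc]
  rw [this]; ring

lemma flowNormSq_PsiF (hc : ∀ x y, 0 ≤ conductS μ r x y)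
    (hrev : ∀ x y, μ x * r x y = μ y * r y x) (f : H → ℝ) :
    flowNormSq μ r (PsiF μ r f) = dirForm μ r f := by
  have h1 : flowNormSq μ r (PsiF μ r f) =
      (1 / 2) * ∑ x, ∑ y, PsiF μ r f x y * (f y - f x) := by
    unfold flowNormSq
    congr 1
    refine sum_congr rfl fun x _ => sum_congr rfl fun y _ => ?_
    rcases (hc x y).eq_or_lt with hz | hpos
    · simp [PsiF, ← hz]
    · simp only [if_pos hpos, PsiF]
      field_simp
  rw [h1, sum_mul_divg (isFlowOf_PsiF f).1, sum_mul_divg_PsiF hrev]; ring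

end Thomson

/-- **Generalized Thomson principle (reversible case).**
Assuming detailed balance, for every flow `φ` one has
`[∑_x h_{A,B}(x) (div φ)(x)]² ≤ cap(A,B) · ‖φ‖²`, with equality iff
`φ = c · Ψ_{h_{A,B}}` for some `c ∈ ℝ`.  Moreover `Ψ_{h_{A,B}}` is a flow of
positive norm attaining the equality, so
`cap(A,B) = sup_{‖φ‖ > 0} ‖φ‖⁻² [∑_x h_{A,B}(x)(div φ)(x)]²`. -/
theorem generalized_thomson_reversible
    {H : Type*} [Fintype H] [DecidableEq H] [Nonempty H]
    (r : H → H → ℝ) (μ : H → ℝ)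
    (hr_nonneg : ∀ x y, 0 ≤ r x y) (hr_diag : ∀ x, r x x = 0)
    (hirr : IrreducibleRates r)
    (hμ_pos : ∀ x, 0 < μ x) (hμ_sum : ∑ x, μ x = 1)
    (hstat : ∀ y, ∑ x, μ x * r x y = μ y * ∑ x, r y x)
    (hrev : ∀ x y, μ x * r x y = μ y * r y x)
    (A B : Finset H) (hA : A.Nonempty) (hB : B.Nonempty) (hAB : Disjoint A B)
    (h : H → ℝ) (hh : IsEqPotential r A B h) :
    (∀ φ : H → H → ℝ, IsFlowOf μ r φ →
      (∑ x, h x * divg φ x) ^ 2 ≤ dirForm μ r h * flowNormSq μ r φ ∧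
      ((∑ x, h x * divg φ x) ^ 2 = dirForm μ r h * flowNormSq μ r φ ↔
        ∃ c : ℝ, φ = fun x y => c * PsiF μ r h x y)) ∧
    IsFlowOf μ r (PsiF μ r h) ∧
    0 < flowNormSq μ r (PsiF μ r h) ∧
    (∑ x, h x * divg (PsiF μ r h) x) ^ 2
      = dirForm μ r h * flowNormSq μ r (PsiF μ r h) := by
  have hc : ∀ x y, 0 ≤ conductS μ r x y := fun x y => by
    rw [conductS_eq hrev]; exact mul_nonneg (hμ_pos x).le (hr_nonneg x y)
  have hN := flowNormSq_PsiF hc hrev h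
  have hΨ : IsFlowOf μ r (PsiF μ r h) := isFlowOf_PsiF h
  have hpos : 0 < flowNormSq μ r (PsiF μ r h) := by
    refine (flowNormSq_nonneg _).lt_of_ne fun h0 => ?_
    obtain ⟨a, ha⟩ := hA
    obtain ⟨b, hb⟩ := hB
    have hne : a ≠ b := fun e => disjoint_left.mp hAB ha (e ▸ hb)
    have := eq_of_PsiF_eq_zero hμ_pos hirr hrev (flow_eq_zero hc hΨ h0.symm) hne
    rw [hh.1 a ha, hh.2.1 b hb] at this
    exact one_ne_zero this
  have hD : 0 < dirForm μ r h := hN ▸ hpos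
  refine ⟨fun φ hφ => ?_, hΨ, hpos, ?_⟩
  · -- `t = S / 𝓓(h)`, with `S = ∑ h div φ`, minimizes `‖φ + t Ψ_h‖²`;
    -- the minimum is `‖φ‖² - S² / 𝓓(h)`.
    obtain ⟨t, ht⟩ : ∃ t, t * dirForm μ r h = ∑ x, h x * divg φ x :=
      ⟨_, div_mul_cancel₀ _ hD.ne'⟩
    have hmin := flowNormSq_add hc hφ h t
    rw [sum_mul_divg hφ.1, hN, ← ht] at hmin
    have hmul : dirForm μ r h * flowNormSq μ r (fun x y => φ x y + t * PsiF μ r h x y) =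
        dirForm μ r h * flowNormSq μ r φ - (t * dirForm μ r h) ^ 2 := by
      rw [hmin]; ring
    rw [← ht]
    refine ⟨?_, fun heq => ⟨-t, ?_⟩, ?_⟩
    · have := mul_nonneg hD.le
        (flowNormSq_nonneg (μ := μ) (r := r) fun x y => φ x y + t * PsiF μ r h x y)
      linarith
    · have h0 := (mul_eq_zero.mp (hmul.trans (by linarith))).resolve_left hD.ne'
      funext x y
      have := flow_eq_zero hc (isFlowOf_add_mul hφ hΨ t) h0 x y
      linarith
    · rintro ⟨c, rfl⟩
      have hS : ∑ x, h x * divg (fun x y => c * PsiF μ r h x y) x = -(c * dirForm μ r h) := by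
        have : ∀ x, divg (fun x y => c * PsiF μ r h x y) x = c * divg (PsiF μ r h) x :=
          fun x => by simp only [divg, mul_sum]
        simp only [this, mul_left_comm _ c]
        rw [← mul_sum, sum_mul_divg_PsiF hrev]; ring
      have htc : t = -c := by
        rw [hS] at ht
        exact mul_right_cancel₀ hD.ne' (by linarith)
      have h0 : flowNormSq μ r (fun x y => c * PsiF μ r h x y + t * PsiF μ r h x y) = 0 := by
        subst htc
        simp [flowNormSq]
      rw [h0, mul_zero] at hmul
      linarith
  · rw [sum_mul_divg_PsiF hrev, hN]; ring
end

section
/- Comparison with the symmetrized chain under the sector condition: suppose the chain satisfies the sector condition with constant C₀ > 0, namely ⟨f, −𝓛g⟩_μ² ≤ C₀·𝓓(f)·𝓓(g) for all f, g : 𝓗 → ℝ, where ⟨f,g⟩_μ = ∑_x μ(x)f(x)g(x). Then for any disjoint nonempty A, B ⊆ 𝓗, cap(A,B) ≤ C₀·cap^s(A,B), i.e., 𝓓(h_{A,B}) ≤ C₀·𝓓(h^s_{A,B}). -/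
/-!
The potentials `h` and `hs` agree on `A ∪ B`, while `𝓛 h` vanishes off `A ∪ B`; hence
`⟨hs, -𝓛 h⟩_μ = ⟨h, -𝓛 h⟩_μ = 𝓓(h)`. The sector condition with `f = hs`, `g = h` then reads
`𝓓(h)² ≤ C₀ 𝓓(hs) 𝓓(h)`, and dividing by `𝓓(h)` gives the claim. When `𝓓(h)` vanishes the claim
is `0 ≤ C₀ 𝓓(hs)`, which is the nonnegativity of the Dirichlet form (`dirForm_nonneg`), a
consequence of stationarity.
-/

open Finset

/-- Stationarity gives `2 𝓓(f) = ∑ x, ∑ y, μ x r(x,y) (f y - f x)²`. -/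
lemma two_mul_dirForm_eq {H : Type*} [Fintype H] (r : H → H → ℝ) (μ : H → ℝ)
    (hstat : ∀ y, ∑ x, μ x * r x y = μ y * ∑ x, r y x) (f : H → ℝ) :
    2 * dirForm μ r f = ∑ x, ∑ y, μ x * r x y * (f y - f x) ^ 2 := by
  -- stationarity tested against `f ^ 2`
  have key : ∑ x, ∑ y, μ x * r x y * f y ^ 2 = ∑ x, ∑ y, μ x * r x y * f x ^ 2 := by
    rw [Finset.sum_comm]
    refine Finset.sum_congr rfl fun y _ => ?_
    rw [← Finset.sum_mul, ← Finset.sum_mul, hstat y, Finset.mul_sum]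
  have expand : ∑ x, ∑ y, μ x * r x y * (f y - f x) ^ 2
      = 2 * dirForm μ r f + (∑ x, ∑ y, μ x * r x y * f y ^ 2
        - ∑ x, ∑ y, μ x * r x y * f x ^ 2) := by
    simp only [dirForm, jumpGen, ← Finset.sum_neg_distrib, Finset.mul_sum,
      ← Finset.sum_sub_distrib, ← Finset.sum_add_distrib]
    refine Finset.sum_congr rfl fun x _ => Finset.sum_congr rfl fun y _ => ?_
    ring
  rw [expand, key]
  ring

lemma dirForm_nonneg {H : Type*} [Fintype H] (r : H → H → ℝ) (μ : H → ℝ)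
    (hr_nonneg : ∀ x y, 0 ≤ r x y) (hμ_pos : ∀ x, 0 < μ x)
    (hstat : ∀ y, ∑ x, μ x * r x y = μ y * ∑ x, r y x) (f : H → ℝ) :
    0 ≤ dirForm μ r f := by
  have hsum : 0 ≤ ∑ x, ∑ y, μ x * r x y * (f y - f x) ^ 2 :=
    Finset.sum_nonneg fun x _ => Finset.sum_nonneg fun y _ =>
      mul_nonneg (mul_nonneg (hμ_pos x).le (hr_nonneg x y)) (sq_nonneg _)
  linarith [two_mul_dirForm_eq r μ hstat f]

/-- **Comparison with the symmetrized chain under the sector condition**: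
if `⟨f, -𝓛g⟩_μ² ≤ C₀ 𝓓(f) 𝓓(g)` for all `f, g`, then
`cap(A,B) ≤ C₀ · cap^s(A,B)`. -/
theorem capacity_sector_comparison
    {H : Type*} [Fintype H] [DecidableEq H] [Nonempty H]
    (r : H → H → ℝ) (μ : H → ℝ)
    (hr_nonneg : ∀ x y, 0 ≤ r x y) (hr_diag : ∀ x, r x x = 0)
    (hirr : IrreducibleRates r)
    (hμ_pos : ∀ x, 0 < μ x) (hμ_sum : ∑ x, μ x = 1)
    (hstat : ∀ y, ∑ x, μ x * r x y = μ y * ∑ x, r y x)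
    (C₀ : ℝ) (hC₀ : 0 < C₀)
    (hsector : ∀ f g : H → ℝ,
      (∑ x, μ x * f x * (-jumpGen r g x)) ^ 2 ≤ C₀ * dirForm μ r f * dirForm μ r g)
    (A B : Finset H) (hA : A.Nonempty) (hB : B.Nonempty) (hAB : Disjoint A B)
    (h : H → ℝ) (hh : IsEqPotential r A B h)
    (hs : H → ℝ)
    (hhs : IsEqPotential (fun x y => (μ x * r x y + μ y * r y x) / (2 * μ x)) A B hs) :
    dirForm μ r h ≤ C₀ * dirForm μ r hs := by
  obtain ⟨hA1, hB0, hharm⟩ := hh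
  obtain ⟨hsA1, hsB0, -⟩ := hhs
  have pairing : ∑ x, μ x * hs x * (-jumpGen r h x) = dirForm μ r h := by
    refine Finset.sum_congr rfl fun x _ => ?_
    by_cases hxA : x ∈ A
    · rw [hA1 x hxA, hsA1 x hxA]
    · by_cases hxB : x ∈ B
      · rw [hB0 x hxB, hsB0 x hxB]
      · rw [hharm x (by simp [hxA, hxB])]
        simp
  have sector := hsector hs h
  rw [pairing] at sector
  have nonneg_hs := dirForm_nonneg r μ hr_nonneg hμ_pos hstat hs
  rcases (dirForm_nonneg r μ hr_nonneg hμ_pos hstat h).eq_or_lt with zero | pos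
  · rw [← zero]
    exact mul_nonneg hC₀.le nonneg_hs
  · exact le_of_mul_le_mul_right (by rwa [← sq]) pos
end

section
/- Characterization of Ising configurations below the energy barrier: assume 5 ≤ K < L. If a configuration σ satisfies H(σ) < 2K + 2, then exactly one of the following holds: (1) σ = ζ_{ℓ,v} for some ℓ ∈ ℤ/Lℤ and some v with 2 ≤ v ≤ L − 2, and in this case 𝒩(σ) = {σ}; or (2) σ ∈ 𝒩(⊞) ∪ 𝒩(⊟). -/
/-!
The energy is the sum, over all rows and columns of the torus, of the number of spin changes along
that cyclic line; a non-constant line contributes at least `2` (`two_le_jumps`).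

Let `H(σ) ≤ 2K + 1`. Some row is constant, as the `L > K` rows cannot all contribute.

* If some column is constant too, it crosses the constant row, so both carry the same spin `s`. Cut
  along this cross, the torus becomes a rectangle. A site with spin `≠ s` for which the sum of its
  two rectangle coordinates is least has two neighbours with spin `s`, so flipping it does not
  raise the energy. Repeating this erodes `σ` to the constant `s` (`connBelow_of_cross`).
* If no column is constant, the columns use up `2K`, so every row is constant and every column has
  exactly two spin changes: `σ` is a band `ζ_{ℓ,v}` with `1 ≤ v ≤ L - 1` (`exists_interval`). When
  `v = 1` or `v = L - 1`, flipping one site of the thin strip creates a constant cross without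
  raising the energy above `2K` (`connBelow_of_strip`), and the previous case applies.

When `2 ≤ v ≤ L - 2`, after any single flip all columns are still non-constant and now one row is
non-constant as well, so the energy is at least `2K + 2`: the band is isolated (`zetaRow_isolated`).
-/

open Finset

/-- The Hamiltonian of the Ising model on the discrete torus
`Λ = (ℤ/Kℤ) × (ℤ/Lℤ)` without external field: the number of unordered pairs of
adjacent sites (adjacency being a difference of `±1` in exactly one coordinate,
with periodic boundary conditions) at which the spins disagree.  Each unordered
edge is counted exactly once, as `{x, x + (1,0)}` or `{x, x + (0,1)}`. -/
def ham (K L : ℕ) [NeZero K] [NeZero L] (σ : ZMod K × ZMod L → ℤ) : ℕ :=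
  ∑ x : ZMod K × ZMod L,
    ((if σ x ≠ σ (x.1 + 1, x.2) then 1 else 0) +
      (if σ x ≠ σ (x.1, x.2 + 1) then 1 else 0))

/-- A spin configuration: a function `Λ → ℤ` taking values in `{-1, +1}`. -/
def IsIsingConfig {K L : ℕ} (σ : ZMod K × ZMod L → ℤ) : Prop :=
  ∀ x, σ x = 1 ∨ σ x = -1

/-- The canonical configuration `ζ_{ℓ,v}`: spins are `+1` exactly on the `v`
consecutive rows `(ℤ/Kℤ) × {ℓ, ℓ+1, …, ℓ+v-1}` and `-1` elsewhere. -/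
def zetaRow (K L : ℕ) (ℓ : ZMod L) (v : ℕ) : ZMod K × ZMod L → ℤ :=
  fun x => if ∃ n < v, x.2 = ℓ + (n : ZMod L) then 1 else -1

/-- `ConnBelow K L c σ ζ` means that `σ` and `ζ` are connected by a `c`-path:
a sequence of configurations, consecutive ones differing at exactly one site,
with Hamiltonian at most `c` throughout. -/
def ConnBelow (K L : ℕ) [NeZero K] [NeZero L] (c : ℕ)
    (σ ζ : ZMod K × ZMod L → ℤ) : Prop :=
  ∃ (T : ℕ) (ω : ℕ → (ZMod K × ZMod L → ℤ)),
    ω 0 = σ ∧ ω T = ζ ∧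
    (∀ t ≤ T, IsIsingConfig (ω t) ∧ ham K L (ω t) ≤ c) ∧
    ∀ t < T, ∃! x : ZMod K × ZMod L, ω t x ≠ ω (t + 1) x

/-! ### Spin changes along a cyclic line -/

/-- The number of spin changes along the cyclic line `g`. -/
def jumps {n : ℕ} [NeZero n] (g : ZMod n → ℤ) : ℕ :=
  #{i : ZMod n | g i ≠ g (i + 1)}

lemma forall_of_forall_succ {n : ℕ} [NeZero n] {P : ZMod n → Prop} (i : ZMod n) (hi : P i)
    (hs : ∀ k, P k → P (k + 1)) (j : ZMod n) : P j := by
  have key : ∀ m : ℕ, P (i + m) := by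
    intro m
    induction m with
    | zero => simpa using hi
    | succ m ih => simpa [add_assoc] using hs _ ih
  have := key (j - i).val
  rwa [ZMod.natCast_zmod_val, add_sub_cancel] at this

/-- The increments around a cycle sum to zero, so there cannot be exactly one spin change. -/
lemma two_le_jumps {n : ℕ} [NeZero n] {g : ZMod n → ℤ} (h : ∃ i j, g i ≠ g j) :
    2 ≤ jumps g := by
  by_contra hlt
  obtain ⟨i, j, hij⟩ := h
  have hex : ∃ k, g k ≠ g (k + 1) := by
    by_contra hno
    push Not at hno
    exact hij (forall_of_forall_succ (P := fun k => g i = g k) i rfl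
      (fun k hk => hk.trans (hno k)) j)
  obtain ⟨k, hk⟩ := hex
  have hcard : #{i : ZMod n | g i ≠ g (i + 1)} ≤ 1 := by
    unfold jumps at hlt; omega
  have huniq : ∀ m, m ≠ k → g (m + 1) - g m = 0 := by
    intro m hm
    by_contra hne
    refine hm (Finset.card_le_one.mp hcard m ?_ k ?_)
    · simp only [mem_filter, mem_univ, true_and]; intro h; exact hne (by rw [h]; ring)
    · simpa using hk
  have hsum : ∑ m : ZMod n, (g (m + 1) - g m) = 0 := by
    rw [Finset.sum_sub_distrib, sub_eq_zero]
    exact Equiv.sum_comp (Equiv.addRight (1 : ZMod n)) g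
  rw [Finset.sum_eq_single k (fun m _ hm => huniq m hm) (by simp)] at hsum
  exact hk (by omega)

lemma jumps_const {n : ℕ} [NeZero n] {g : ZMod n → ℤ} (s : ℤ) (h : ∀ i, g i = s) :
    jumps g = 0 := by
  simp [jumps, h]

lemma jumps_le_two {n : ℕ} [NeZero n] {g : ZMod n → ℤ} (i : ZMod n) (s : ℤ)
    (h : ∀ k, k ≠ i → g k = s) : jumps g ≤ 2 := by
  refine (Finset.card_le_card (t := {i, i - 1}) ?_).trans Finset.card_le_two
  intro k hk
  simp only [mem_filter, mem_univ, true_and] at hk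
  simp only [mem_insert, mem_singleton]
  by_contra hno
  push Not at hno
  refine hk ?_
  rw [h k hno.1, h (k + 1) (fun h' => hno.2 (by rw [← h']; ring))]

/-- Aligning a spin with its predecessor removes the change at `i - 1` and creates at most
one, at `i`; the other changes are not affected. -/
lemma jumps_update_le {n : ℕ} [NeZero n] {g : ZMod n → ℤ} (i : ZMod n) (s : ℤ)
    (h : g (i - 1) = s) (hi : g i ≠ s) : jumps (Function.update g i s) ≤ jumps g := by
  refine Finset.card_le_card_of_injOn (Equiv.swap i (i - 1)) ?_
    (Equiv.injective _).injOn
  intro k hk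
  simp only [coe_filter, mem_univ, true_and, Set.mem_ofPred_eq] at hk ⊢
  by_cases h1 : k = i
  · subst h1
    simp only [Equiv.swap_apply_left, sub_add_cancel, h]
    exact hi.symm
  by_cases h2 : k = i - 1
  · subst h2
    simp [Function.update_of_ne h1, h] at hk
  · have h3 : k + 1 ≠ i := fun h' => h2 (by rw [← h']; ring)
    rw [Function.update_of_ne h1, Function.update_of_ne h3] at hk
    rwa [Equiv.swap_apply_of_ne_of_ne h1 h2]

/-- A non-constant cyclic `±1` line with at most two spin changes is `+1` exactly on an
interval. -/
lemma exists_interval {n : ℕ} [NeZero n] {g : ZMod n → ℤ} (hg : ∀ i, g i = 1 ∨ g i = -1)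
    (hne : ∃ i j, g i ≠ g j) (h2 : jumps g ≤ 2) :
    ∃ (ℓ : ZMod n) (v : ℕ), 1 ≤ v ∧ v < n ∧
      (∀ m < v, g (ℓ + m) = 1) ∧ (∀ m, v ≤ m → m < n → g (ℓ + m) = -1) := by
  have hm1 : ∃ i, g i = -1 := by
    by_contra hno
    push Not at hno
    obtain ⟨i, j, hij⟩ := hne
    exact hij (((hg i).resolve_right (hno i)).trans ((hg j).resolve_right (hno j)).symm)
  have hp1 : ∃ i, g i = 1 := by
    by_contra hno
    push Not at hno
    obtain ⟨i, j, hij⟩ := hne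
    exact hij (((hg i).resolve_left (hno i)).trans ((hg j).resolve_left (hno j)).symm)
  obtain ⟨a, ha, hal⟩ : ∃ a, g a = -1 ∧ g (a + 1) = 1 := by
    by_contra hno
    push Not at hno
    obtain ⟨i, hi⟩ := hm1
    obtain ⟨j, hj⟩ := hp1
    have := forall_of_forall_succ (P := fun k => g k = -1) i hi
      (fun k hk => (hg _).resolve_left (hno k hk)) j
    omega
  have hn : 0 < n := Nat.pos_of_ne_zero (NeZero.ne n)
  have hcast : ((n - 1 : ℕ) : ZMod n) = -1 := by
    rw [Nat.cast_sub hn]; simp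
  have hex : ∃ m : ℕ, g (a + 1 + m) = -1 := ⟨n - 1, by rw [hcast]; simpa using ha⟩
  classical
  obtain ⟨v, hv, hmin⟩ : ∃ v : ℕ, g (a + 1 + v) = -1 ∧ ∀ m < v, g (a + 1 + m) ≠ -1 :=
    ⟨Nat.find hex, Nat.find_spec hex, fun m hm => Nat.find_min hex hm⟩
  have hv1 : 1 ≤ v := by
    rcases Nat.eq_zero_or_pos v with rfl | h
    · simp [hal] at hv
    · exact h
  have hvn : v < n := by
    by_contra hge
    exact hmin (n - 1) (by omega) (by rw [hcast]; simpa using ha)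
  refine ⟨a + 1, v, hv1, hvn, fun m hm => (hg _).resolve_right (hmin m hm), ?_⟩
  intro m hvm
  induction m, hvm using Nat.le_induction with
  | base => intro _; exact hv
  | succ m hvm ih =>
    intro hmn
    have hm := ih (by omega)
    by_contra hne1
    have hp := (hg (a + 1 + (m + 1 : ℕ))).resolve_right hne1
    -- A further change at `a + 1 + m` would be a third one, besides those at `a` and `a + v`.
    have hb : g (a + v) = 1 := by
      have := (hg _).resolve_right (hmin (v - 1) (by omega))
      rw [Nat.cast_sub hv1] at this
      rw [← this]; congr 1; push_cast; ring
    have hbs : g (a + v + 1) = -1 := by rw [← hv]; congr 1; ring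
    have hcs : g (a + 1 + m + 1) = 1 := by rw [← hp]; congr 1; push_cast; ring
    have hac : a ≠ a + 1 + m := by
      intro h
      have h0 : ((m + 1 : ℕ) : ZMod n) = 0 := by
        push_cast
        have h' : a + ((m : ZMod n) + 1) = a + 0 := by
          rw [add_zero]; conv_rhs => rw [h]
          ring
        exact add_left_cancel h'
      rw [ZMod.natCast_eq_zero_iff] at h0
      exact absurd (Nat.le_of_dvd (by omega) h0) (by omega)
    have hab : a ≠ a + v := by intro h; rw [← h, ha] at hb; omega
    have hbc : a + (v : ZMod n) ≠ a + 1 + m := by intro h; rw [h, hm] at hb; omega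
    have h3 : #({a, a + (v : ZMod n), a + 1 + m} : Finset (ZMod n)) = 3 :=
      Finset.card_eq_three.mpr ⟨_, _, _, hab, hac, hbc, rfl⟩
    have hle : #({a, a + (v : ZMod n), a + 1 + m} : Finset (ZMod n)) ≤ jumps g := by
      refine Finset.card_le_card ?_
      intro k hk
      simp only [mem_insert, mem_singleton] at hk
      simp only [mem_filter, mem_univ, true_and]
      rcases hk with rfl | rfl | rfl
      · rw [ha, hal]; decide
      · rw [hb, hbs]; decide
      · rw [hm, hcs]; decide
    omega

/-! ### The energy as a sum over lines -/

section Torus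

variable {K L : ℕ} [NeZero K] [NeZero L]

lemma ham_eq (σ : ZMod K × ZMod L → ℤ) :
    ham K L σ = ∑ j, jumps (fun i => σ (i, j)) + ∑ i, jumps (fun j => σ (i, j)) := by
  unfold ham jumps
  simp only [Finset.card_filter]
  rw [Finset.sum_add_distrib, Fintype.sum_prod_type, Fintype.sum_prod_type, Finset.sum_comm]

lemma row_update {K L : ℕ} (σ : ZMod K × ZMod L → ℤ) (x : ZMod K × ZMod L) (s : ℤ) (j : ZMod L) :
    (fun i => Function.update σ x s (i, j)) =
      if j = x.2 then Function.update (fun i => σ (i, j)) x.1 s else fun i => σ (i, j) := by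
  funext i
  obtain ⟨a, b⟩ := x
  by_cases hj : j = b <;> by_cases hi : i = a <;> simp [hi, hj]

lemma col_update {K L : ℕ} (σ : ZMod K × ZMod L → ℤ) (x : ZMod K × ZMod L) (s : ℤ) (i : ZMod K) :
    (fun j => Function.update σ x s (i, j)) =
      if i = x.1 then Function.update (fun j => σ (i, j)) x.2 s else fun j => σ (i, j) := by
  funext j
  obtain ⟨a, b⟩ := x
  by_cases hj : j = b <;> by_cases hi : i = a <;> simp [hi, hj]

lemma ham_update_le (σ : ZMod K × ZMod L → ℤ) (x : ZMod K × ZMod L) (s : ℤ)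
    (hx : σ x ≠ s) (h1 : σ (x.1 - 1, x.2) = s) (h2 : σ (x.1, x.2 - 1) = s) :
    ham K L (Function.update σ x s) ≤ ham K L σ := by
  rw [ham_eq, ham_eq]
  refine Nat.add_le_add (Finset.sum_le_sum fun j _ => ?_) (Finset.sum_le_sum fun i _ => ?_)
  · rw [row_update]
    split_ifs with hj
    · subst hj; exact jumps_update_le _ _ h1 hx
    · exact le_rfl
  · rw [col_update]
    split_ifs with hi
    · subst hi; exact jumps_update_le _ _ h2 hx
    · exact le_rfl

/-! ### Paths below an energy level -/

lemma ConnBelow.symm {c : ℕ} {σ ζ : ZMod K × ZMod L → ℤ} (h : ConnBelow K L c σ ζ) :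
    ConnBelow K L c ζ σ := by
  obtain ⟨T, ω, h0, hT, hc, hs⟩ := h
  refine ⟨T, fun t => ω (T - t), by simpa using hT, by simpa using h0,
    fun t _ => hc _ (Nat.sub_le _ _), fun t ht => ?_⟩
  have h := hs (T - (t + 1)) (by omega)
  rw [show T - (t + 1) + 1 = T - t by omega] at h
  simpa only [ne_comm] using h

lemma ConnBelow.refl {c : ℕ} {σ : ZMod K × ZMod L → ℤ} (hσ : IsIsingConfig σ)
    (h : ham K L σ ≤ c) : ConnBelow K L c σ σ :=
  ⟨0, fun _ => σ, rfl, rfl, fun _ _ => ⟨hσ, h⟩, fun t ht => absurd ht (Nat.not_lt_zero t)⟩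

/-- Appending to a path the step that undoes a flip `σ ↦ Function.update σ x s`. -/
lemma ConnBelow.of_update {c : ℕ} {ρ σ : ZMod K × ZMod L → ℤ} {x : ZMod K × ZMod L} {s : ℤ}
    (h : ConnBelow K L c ρ (Function.update σ x s)) (hσ : IsIsingConfig σ)
    (hc : ham K L σ ≤ c) (hx : σ x ≠ s) : ConnBelow K L c ρ σ := by
  obtain ⟨T, ω, h0, hT, hω, hs⟩ := h
  refine ⟨T + 1, fun t => if t ≤ T then ω t else σ, by simpa using h0, by simp, ?_, ?_⟩
  · intro t _
    dsimp only
    split_ifs with h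
    · exact hω t h
    · exact ⟨hσ, hc⟩
  · intro t ht
    rcases Nat.lt_or_ge t T with h | h
    · simpa [h.le, Nat.succ_le_of_lt h] using hs t h
    · obtain rfl : t = T := by omega
      refine ⟨x, by simpa [hT] using hx.symm, fun y hy => ?_⟩
      by_contra hne
      simp [hT, Function.update_of_ne hne] at hy

lemma IsIsingConfig.update {K L : ℕ} {σ : ZMod K × ZMod L → ℤ} (hσ : IsIsingConfig σ)
    (x : ZMod K × ZMod L) {s : ℤ} (hs : s = 1 ∨ s = -1) :
    IsIsingConfig (Function.update σ x s) := by
  intro y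
  by_cases h : y = x
  · subst h; simpa using hs
  · simpa [Function.update_of_ne h] using hσ y

lemma val_sub_one_lt {n : ℕ} [NeZero n] {a : ZMod n} (ha : a ≠ 0) : (a - 1).val < a.val := by
  have hpos : 0 < a.val := Nat.pos_of_ne_zero (fun h => ha ((ZMod.val_eq_zero a).mp h))
  have hlt := ZMod.val_lt a
  have : a - 1 = ((a.val - 1 : ℕ) : ZMod n) := by
    rw [Nat.cast_sub hpos, ZMod.natCast_zmod_val, Nat.cast_one]
  rw [this, ZMod.val_natCast, Nat.mod_eq_of_lt (by omega)]
  omega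

/-- Erosion: a configuration equal to `s` on a whole row and a whole column can be turned into
the constant `s` without raising the energy. -/
lemma connBelow_of_cross {c : ℕ} {s : ℤ} (hs : s = 1 ∨ s = -1) (a : ZMod K) (b : ZMod L)
    (N : ℕ) : ∀ σ : ZMod K × ZMod L → ℤ, #{x | σ x ≠ s} = N → IsIsingConfig σ →
      ham K L σ ≤ c → (∀ j, σ (a, j) = s) → (∀ i, σ (i, b) = s) →
      ConnBelow K L c (fun _ => s) σ := by
  induction N with
  | zero =>
    intro σ hN hσ hc _ _
    have : σ = fun _ => s := by
      funext x
      rw [Finset.card_eq_zero, Finset.filter_eq_empty_iff] at hN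
      simpa using hN (mem_univ x)
    rw [← this]
    exact ConnBelow.refl hσ hc
  | succ N ih =>
    intro σ hN hσ hc hcol hrow
    obtain ⟨x, hx, hmin⟩ := Finset.exists_min_image ({x | σ x ≠ s} : Finset _)
      (fun x => (x.1 - a).val + (x.2 - b).val) (Finset.card_pos.mp (by omega))
    simp only [mem_filter, mem_univ, true_and] at hx hmin
    have hxa : x.1 ≠ a := fun h => hx (by rw [← hcol x.2, ← h])
    have hxb : x.2 ≠ b := fun h => hx (by rw [← hrow x.1, ← h])
    have h1 : σ (x.1 - 1, x.2) = s := by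
      by_contra h
      have h' := hmin _ h
      have h'' := val_sub_one_lt (sub_ne_zero.mpr hxa)
      simp only [sub_right_comm x.1 1 a] at h'
      omega
    have h2 : σ (x.1, x.2 - 1) = s := by
      by_contra h
      have h' := hmin _ h
      have h'' := val_sub_one_lt (sub_ne_zero.mpr hxb)
      simp only [sub_right_comm x.2 1 b] at h'
      omega
    refine ConnBelow.of_update (x := x) (s := s) (ih _ ?_ (hσ.update x hs)
      ((ham_update_le σ x s hx h1 h2).trans hc) ?_ ?_) hσ hc hx
    · have : ({y | Function.update σ x s y ≠ s} : Finset _) =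
          ({y | σ y ≠ s} : Finset _).erase x := by
        ext y
        by_cases h : y = x <;> simp [h, Function.update_apply]
      rw [this, Finset.card_erase_of_mem (by simpa using hx), hN]
      rfl
    · intro j
      rw [Function.update_of_ne (fun h => hxa (by rw [← h])), hcol]
    · intro i
      rw [Function.update_of_ne (fun h => hxb (by rw [← h])), hrow]

/-- A strip of width one can be eroded as well: its first flip creates a constant column and
leaves the energy at most `2 + 2 (K - 1) = 2K`. -/
lemma connBelow_of_strip {s s' : ℤ} (hs : s = 1 ∨ s = -1) (hne : s' ≠ s) (hL : 2 ≤ L) (r : ZMod L)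
    {σ : ZMod K × ZMod L → ℤ} (hσ : IsIsingConfig σ) (hc : ham K L σ ≤ 2 * K + 1)
    (hr : ∀ i, σ (i, r) = s') (ho : ∀ i j, j ≠ r → σ (i, j) = s) :
    ConnBelow K L (2 * K + 1) (fun _ => s) σ := by
  have hr1 : r + 1 ≠ r := by
    have : Fact (1 < L) := ⟨hL⟩
    simp
  have hrow : ∑ j, jumps (fun i => Function.update σ (0, r) s (i, j)) ≤ 2 := by
    calc _ ≤ ∑ j, (if j = r then 2 else 0) := by
          refine Finset.sum_le_sum fun j _ => ?_
          split_ifs with hj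
          · subst hj
            exact jumps_le_two 0 s' (fun k hk => by simp [hk, hr])
          · exact (jumps_const s fun i => by simp [hj, ho]).le
      _ = 2 := by simp
  have hcol : ∑ i, jumps (fun j => Function.update σ (0, r) s (i, j)) + 2 ≤ K * 2 := by
    calc _ ≤ ∑ i : ZMod K, ((if i = 0 then 0 else 2) + (if i = 0 then 2 else 0)) := by
          rw [Finset.sum_add_distrib]
          refine Nat.add_le_add (Finset.sum_le_sum fun i _ => ?_) (by simp)
          split_ifs with hi
          · subst hi
            refine (jumps_const s fun j => ?_).le
            by_cases hj : j = r <;> simp [hj, ho]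
          · exact jumps_le_two r s (fun k hk => by simp [hk, ho])
      _ = ∑ i : ZMod K, 2 := Finset.sum_congr rfl fun i _ => by split_ifs <;> rfl
      _ = K * 2 := by simp
  refine ConnBelow.of_update (x := (0, r)) (s := s)
    (connBelow_of_cross hs 0 (r + 1) _ _ rfl (hσ.update _ hs) ?_ ?_ ?_) hσ hc
    (by rw [hr]; exact hne)
  · rw [ham_eq]; omega
  · intro j
    by_cases hj : j = r <;> simp [hj, ho]
  · intro i
    rw [Function.update_of_ne (by simp [hr1]), ho _ _ hr1]

/-! ### Bands of intermediate width are isolated -/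

lemma two_mul_le_cols {σ : ZMod K × ZMod L → ℤ} (h : ∀ i, ∃ j j', σ (i, j) ≠ σ (i, j')) :
    2 * K ≤ ∑ i, jumps (fun j => σ (i, j)) := by
  calc 2 * K = ∑ i : ZMod K, 2 := by simp [mul_comm]
    _ ≤ _ := Finset.sum_le_sum fun i _ => two_le_jumps (h i)

lemma two_mul_le_rows {σ : ZMod K × ZMod L → ℤ} (h : ∀ j, ∃ i i', σ (i, j) ≠ σ (i', j)) :
    2 * L ≤ ∑ j, jumps (fun i => σ (i, j)) := by
  calc 2 * L = ∑ j : ZMod L, 2 := by simp [mul_comm]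
    _ ≤ _ := Finset.sum_le_sum fun i _ => two_le_jumps (h i)

lemma two_le_rows {σ : ZMod K × ZMod L → ℤ} (j : ZMod L) (h : ∃ i i', σ (i, j) ≠ σ (i', j)) :
    2 ≤ ∑ j, jumps (fun i => σ (i, j)) :=
  (two_le_jumps h).trans
    (Finset.single_le_sum (f := fun j => jumps (fun i => σ (i, j))) (fun _ _ => Nat.zero_le _)
      (mem_univ j))

lemma add_natCast_ne {n : ℕ} (ℓ : ZMod n) {a b : ℕ} (ha : a < n) (hb : b < n) (hab : a ≠ b) :
    ℓ + (a : ZMod n) ≠ ℓ + b := by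
  intro h
  have h' := (ZMod.natCast_eq_natCast_iff' _ _ _).mp (add_left_cancel h)
  rw [Nat.mod_eq_of_lt ha, Nat.mod_eq_of_lt hb] at h'
  exact hab h'

lemma zetaRow_pos {K L : ℕ} (ℓ : ZMod L) {v m : ℕ} (h : m < v) (i : ZMod K) :
    zetaRow K L ℓ v (i, ℓ + m) = 1 :=
  if_pos ⟨m, h, rfl⟩

lemma zetaRow_neg {K L : ℕ} (ℓ : ZMod L) {v m : ℕ} (h : v ≤ m) (hm : m < L) (i : ZMod K) :
    zetaRow K L ℓ v (i, ℓ + m) = -1 := by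
  refine if_neg ?_
  rintro ⟨n, hn, he⟩
  exact add_natCast_ne ℓ hm (by omega) (by omega) he

/-- Each column of a band with `2 ≤ v ≤ L - 2` has two sites of either spin, so one flip cannot make it
constant, while it makes the row of the flipped site non-constant. -/
lemma zetaRow_isolated (hK : 2 ≤ K) (ℓ : ZMod L) {v : ℕ} (hv : 2 ≤ v) (hvL : v + 2 ≤ L)
    {τ : ZMod K × ZMod L → ℤ} (h : ∃! x, zetaRow K L ℓ v x ≠ τ x) : 2 * K + 2 ≤ ham K L τ := by
  obtain ⟨⟨a, b⟩, hx, huniq⟩ := h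
  have hoff : ∀ i j, (i, j) ≠ (a, b) → τ (i, j) = zetaRow K L ℓ v (i, j) := by
    intro i j hne
    by_contra hh
    exact hne (huniq _ (Ne.symm hh))
  have hcols : 2 * K ≤ ∑ i, jumps (fun j => τ (i, j)) := by
    refine two_mul_le_cols fun i => ?_
    have pick : ∀ m₁ m₂ : ℕ, m₁ < L → m₂ < L → m₁ ≠ m₂ → ℓ + (m₁ : ZMod L) ≠ b ∨
        ℓ + (m₂ : ZMod L) ≠ b := by
      intro m₁ m₂ h1 h2 h12
      by_contra hno
      push Not at hno
      exact add_natCast_ne ℓ h1 h2 h12 (hno.1.trans hno.2.symm)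
    obtain ⟨p, hp⟩ : ∃ p, τ (i, p) = 1 := by
      rcases pick 0 1 (by omega) (by omega) (by omega) with h | h
      · exact ⟨_, (hoff i _ (by simp only [ne_eq, Prod.mk.injEq, not_and]; exact fun _ => h)).trans
          (zetaRow_pos ℓ (by omega) i)⟩
      · exact ⟨_, (hoff i _ (by simp only [ne_eq, Prod.mk.injEq, not_and]; exact fun _ => h)).trans
          (zetaRow_pos ℓ (by omega) i)⟩
    obtain ⟨q, hq⟩ : ∃ q, τ (i, q) = -1 := by
      rcases pick (L - 1) (L - 2) (by omega) (by omega) (by omega) with h | h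
      · exact ⟨_, (hoff i _ (by simp only [ne_eq, Prod.mk.injEq, not_and]; exact fun _ => h)).trans
          (zetaRow_neg ℓ (by omega) (by omega) i)⟩
      · exact ⟨_, (hoff i _ (by simp only [ne_eq, Prod.mk.injEq, not_and]; exact fun _ => h)).trans
          (zetaRow_neg ℓ (by omega) (by omega) i)⟩
    exact ⟨p, q, by rw [hp, hq]; decide⟩
  have hrow : 2 ≤ ∑ j, jumps (fun i => τ (i, j)) := by
    have : Fact (1 < K) := ⟨hK⟩
    refine two_le_rows b ⟨a, a + 1, ?_⟩
    rw [hoff (a + 1) b (by simp)]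
    exact Ne.symm hx
  rw [ham_eq]
  omega

lemma eq_of_connBelow_zetaRow (hK : 2 ≤ K) (ℓ : ZMod L) {v : ℕ} (hv : 2 ≤ v) (hvL : v + 2 ≤ L)
    {ζ : ZMod K × ZMod L → ℤ} (h : ConnBelow K L (2 * K + 1) (zetaRow K L ℓ v) ζ) :
    ζ = zetaRow K L ℓ v := by
  obtain ⟨T, ω, h0, hT, hω, hs⟩ := h
  cases T with
  | zero => rw [← hT, h0]
  | succ T =>
    have h1 := hs 0 (by omega)
    rw [h0, zero_add] at h1
    have := zetaRow_isolated hK ℓ hv hvL h1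
    have := (hω 1 (by omega)).2
    omega

/-! ### Classification -/

/-- The dichotomy without its exclusivity. -/
lemma band_or_connBelow (hK : 5 ≤ K) (hKL : K < L) {σ : ZMod K × ZMod L → ℤ}
    (hσ : IsIsingConfig σ) (hlow : ham K L σ ≤ 2 * K + 1) :
    (∃ (ℓ : ZMod L) (v : ℕ), 2 ≤ v ∧ v ≤ L - 2 ∧ σ = zetaRow K L ℓ v) ∨
      (ConnBelow K L (2 * K + 1) (fun _ => 1) σ ∨ ConnBelow K L (2 * K + 1) (fun _ => -1) σ) := by
  have hham := ham_eq σ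
  obtain ⟨b, hb⟩ : ∃ b, ∀ i i', σ (i, b) = σ (i', b) := by
    by_contra hno
    push Not at hno
    have := two_mul_le_rows hno
    omega
  by_cases hcol : ∃ a, ∀ j j', σ (a, j) = σ (a, j')
  · obtain ⟨a, ha⟩ := hcol
    have hcross := connBelow_of_cross (hσ (a, b)) a b _ σ rfl hσ hlow
      (fun j => ha j b) (fun i => hb i a)
    right
    rcases hσ (a, b) with h | h <;> rw [h] at hcross
    · exact Or.inl hcross
    · exact Or.inr hcross
  · push Not at hcol
    have hcols := two_mul_le_cols hcol
    have hrows : ∀ j i i', σ (i, j) = σ (i', j) := by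
      intro j
      by_contra hno
      push Not at hno
      have := two_le_rows j hno
      omega
    have hsum : ∑ i, jumps (fun j => σ (i, j)) = K * jumps (fun j => σ (0, j)) := by
      rw [Finset.sum_congr rfl (fun i _ => by rw [funext (fun j => hrows j i 0)])]
      simp
    have h2 : jumps (fun j => σ (0, j)) ≤ 2 := by
      by_contra h3
      have : K * 3 ≤ K * jumps (fun j => σ (0, j)) := Nat.mul_le_mul_left K (by omega)
      omega
    obtain ⟨ℓ, v, hv1, hvL, hpos, hneg⟩ := exists_interval (fun j => hσ (0, j)) (hcol 0) h2
    have hrep : ∀ j : ZMod L, ∃ m < L, j = ℓ + (m : ZMod L) := fun j =>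
      ⟨(j - ℓ).val, ZMod.val_lt _, by rw [ZMod.natCast_zmod_val]; ring⟩
    rcases Nat.lt_or_ge v 2 with hv | hv
    · obtain rfl : v = 1 := by omega
      refine Or.inr (Or.inr (connBelow_of_strip (s' := 1) (Or.inr rfl) (by decide) (by omega) ℓ hσ
        hlow (fun i => ?_) (fun i j hj => ?_)))
      · rw [hrows ℓ i 0]; simpa using hpos 0 (by omega)
      · obtain ⟨m, hm, rfl⟩ := hrep j
        rw [hrows _ i 0]
        refine hneg m (Nat.one_le_iff_ne_zero.mpr ?_) hm
        rintro rfl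
        simp at hj
    rcases Nat.lt_or_ge (L - 2) v with hv' | hv'
    · obtain rfl : v = L - 1 := by omega
      refine Or.inr (Or.inl (connBelow_of_strip (s' := -1) (Or.inl rfl) (by decide) (by omega)
        (ℓ + ((L - 1 : ℕ) : ZMod L)) hσ hlow (fun i => ?_) (fun i j hj => ?_)))
      · rw [hrows _ i 0]; exact hneg (L - 1) le_rfl (by omega)
      · obtain ⟨m, hm, rfl⟩ := hrep j
        rw [hrows _ i 0]
        have : m ≠ L - 1 := by rintro rfl; exact hj rfl
        exact hpos m (by omega)
    · refine Or.inl ⟨ℓ, v, hv, hv', ?_⟩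
      funext ⟨i, j⟩
      obtain ⟨m, hm, rfl⟩ := hrep j
      rw [hrows _ i 0]
      rcases Nat.lt_or_ge m v with h | h
      · rw [zetaRow_pos ℓ h]; exact hpos m h
      · rw [zetaRow_neg ℓ h hm]; exact hneg m h hm

end Torus

/-- **Characterization of Ising configurations below the energy barrier**
(for `5 ≤ K < L`): if `H(σ) < 2K + 2` then exactly one of the following holds:
(1) `σ = ζ_{ℓ,v}` for some `ℓ` and `2 ≤ v ≤ L - 2`, and then
`𝒩(σ) = {σ}` (where `𝒩(σ)` is the set of configurations connected to `σ` by a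
`(2K+1)`-path); or (2) `σ ∈ 𝒩(⊞) ∪ 𝒩(⊟)`. -/
theorem ising_low_energy_characterization (K L : ℕ) [NeZero K] [NeZero L]
    (hK : 5 ≤ K) (hKL : K < L)
    (σ : ZMod K × ZMod L → ℤ) (hσ : IsIsingConfig σ)
    (hlow : ham K L σ < 2 * K + 2) :
    Xor'
      ((∃ (ℓ : ZMod L) (v : ℕ), 2 ≤ v ∧ v ≤ L - 2 ∧ σ = zetaRow K L ℓ v) ∧
        {ζ : ZMod K × ZMod L → ℤ | ConnBelow K L (2 * K + 1) σ ζ} = {σ})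
      (ConnBelow K L (2 * K + 1) (fun _ => 1) σ ∨
        ConnBelow K L (2 * K + 1) (fun _ => -1) σ) := by
  have hle : ham K L σ ≤ 2 * K + 1 := by omega
  have hsing : ∀ ℓ v, 2 ≤ v → v ≤ L - 2 → σ = zetaRow K L ℓ v →
      ∀ ζ, ConnBelow K L (2 * K + 1) σ ζ → ζ = σ := by
    rintro ℓ v hv hvL rfl ζ h
    exact eq_of_connBelow_zetaRow (by omega) ℓ hv (by omega) h
  by_cases hband : ∃ (ℓ : ZMod L) (v : ℕ), 2 ≤ v ∧ v ≤ L - 2 ∧ σ = zetaRow K L ℓ v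
  · obtain ⟨ℓ, v, hv, hvL, hζ⟩ := hband
    refine Or.inl ⟨⟨⟨ℓ, v, hv, hvL, hζ⟩, ?_⟩, ?_⟩
    · ext ζ
      simp only [Set.mem_ofPred_eq, Set.mem_singleton_iff]
      exact ⟨hsing ℓ v hv hvL hζ ζ, fun h => by rw [h]; exact ConnBelow.refl hσ hle⟩
    · have hp := zetaRow_pos (K := K) ℓ (m := 0) (v := v) (by omega) 0
      have hn := zetaRow_neg (K := K) ℓ (m := L - 1) (v := v) (by omega) (by omega) 0
      rw [← hζ] at hp hn
      rintro (h | h)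
      · have := hsing ℓ v hv hvL hζ _ h.symm
        rw [← this] at hn
        norm_num at hn
      · have := hsing ℓ v hv hvL hζ _ h.symm
        rw [← this] at hp
        norm_num at hp
  · exact Or.inr ⟨(band_or_connBelow hK hKL hσ hle).resolve_left hband, fun h => hband h.1⟩
end
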